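/- arXiv:2312.15669 — 2 statements merged into one kernel-verified Lean document; each statement's English description precedes it below -/
import Mathlib

section
/- Let f(n1,n2,n3,y) be the Casoratian in the direction n1 of the vector ψ with entries ψ_j(n1,n2,n3,y) = ρ_j^+ e^{y/(a3+k_j)} ∏_{i=1}^3 (a_i+k_j)^{n_i} + ρ_j^- e^{y/(a3−k_j)} ∏_{i=1}^3 (a_i−k_j)^{n_i}. Then f satisfies the bilinear Q1 (linear background) system at every point: 𝒬0 := (a1−a2) f_3 f_12 + (a2−a3) f_1 f_23 + (a3−a1) f_2 f_13 = 0; 𝒬1 := (a2−a3) f_123 f + (a1+a3) f_12 f_3 − (a1+a2) f_13 f_2 = 0; 𝒬2 := (a1−a2) f_123 f + (a2+a3) f_13 f_2 − (a1+a3) f_23 f_1 = 0; 𝒬3 := 2 f_1 f_23 − 2 f_13 f_2 + (a3−a1)((∂_y f_2) f_13 − f_2 (∂_y f_13)) + (a2−a3)((∂_y f_1) f_23 − f_1 (∂_y f_23)) − (a1−a2)((∂_y f_3) f_12 − f_3 (∂_y f_12)) = 0; and 𝒬4 := 2 f_23 f_1 − 2 f_13 f_2 − (a1+a3)((∂_y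 f_1) f_23 − f_1 (∂_y f_23)) + (a2+a3)((∂_y f_2) f_13 − f_2 (∂_y f_13)) + (a1−a2)((∂_y f) f_123 − f (∂_y f_123)) = 0. -/
/-!
The Casoratian is the determinant `wdet` of the matrix `u_j x_j^m + v_j z_j^m` with
`x_j = a1 + k_j`, `z_j = a1 - k_j`, and a unit shift in `n_i` multiplies the weights `u_j, v_j` by
`a_i + k_j, a_i - k_j`. Every claim is thus about `wdet` as a function of its weights.

* `𝒬0` is the Hirota–Miwa equation `wdet_hirota`. Write the shifted determinants as determinants
  of size `N + 2`, bordered by two of the rows `((-b_i)^m)_m`, `(0, …, 0, 1)`: adding `b` times each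
  column to the next collapses an evaluation row at `-b` and replaces the sequence `c(m)` by
  `c(m + 1) + b c(m)`. The equation then is the three-term Plücker relation `plucker`, which is
  Cramer's rule.
* `𝒬1` and `𝒬2` are the same equation with one parameter `b` replaced by `-b`. Starting from
  weights already shifted by `b`, the shift by `-b` multiplies the weights by
  `-(b + k_j)(b - k_j)`, the same factor for `u_j` and `v_j`, which comes out of the
  determinant (`wdet_reflected`).
* The `y`-derivative multiplies the weights infinitesimally by `1 / (a3 ± k_j)`, as does replacing
  one shift `a3 ± k_j` by `a3 + ε ± k_j` (at `ε = 0`). Differentiating `𝒬0` for the parameters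
  `(a1, a2, a3 + ε)` in `ε` gives a relation `A` in which only the factors carrying a shift in `n3`
  are differentiated, and then `𝒬3 = ∂_y 𝒬0 - 2 A`. In the same way `𝒬2` gives `B` and
  `𝒬4 = ∂_y 𝒬2 - 2 B`.
-/

open Matrix

/-- Three-term Plücker relation for determinants that share all rows but the first two. -/
lemma plucker {n : ℕ} (c : Fin n → Fin (n + 2) → ℂ) (x y z w : Fin (n + 2) → ℂ) :
    det (of (vecCons x (vecCons y c))) * det (of (vecCons z (vecCons w c))) =
      det (of (vecCons z (vecCons y c))) * det (of (vecCons x (vecCons w c))) +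
      det (of (vecCons x (vecCons z c))) * det (of (vecCons y (vecCons w c))) := by
  set A : Matrix (Fin (n + 2)) (Fin (n + 2)) ℂ := of (vecCons x (vecCons y c)) with hA
  let l : (Fin (n + 2) → ℂ) →ₗ[ℂ] ℂ :=
    (detRowAlternating (R := ℂ) (n := Fin (n + 2))).toMultilinearMap.toLinearMap
      (vecCons 0 (vecCons w c)) 0
  have hl : ∀ v, l v = det (of (vecCons v (vecCons w c))) := by
    intro v
    change det (Function.update (vecCons 0 (vecCons w c)) 0 v) = _
    congr 1
    ext i j
    refine Fin.cases ?_ (fun i => ?_) i <;> simp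
  -- Cramer's rule expands `det A • z` in the rows of `A`.
  have key : det A • z = ∑ i, det (A.updateRow i z) • A i := by
    rw [← det_transpose A, ← mulVec_cramer Aᵀ z]
    ext j
    simp [mulVec, dotProduct, cramer_transpose_apply, mul_comm]
  have h := congrArg l key
  rw [map_smul, map_sum, Fin.sum_univ_succ, Fin.sum_univ_succ, Finset.sum_eq_zero] at h
  · have e0 : A.updateRow 0 z = of (vecCons z (vecCons y c)) := by
      ext i j
      refine Fin.cases ?_ (fun i => ?_) i <;> simp [hA, updateRow_apply]
    have e1 : A.updateRow (Fin.succ 0) z = of (vecCons x (vecCons z c)) := by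
      ext i j
      refine Fin.cases ?_ (fun i => Fin.cases ?_ (fun i => ?_) i) i <;>
        simp [hA, updateRow_apply, Fin.ext_iff]
    rw [e0, e1, map_smul, map_smul, hl, hl, hl] at h
    have a0 : A 0 = x := rfl
    have a1 : A (Fin.succ 0) = y := rfl
    rw [a0, a1] at h
    simpa using h
  · intro i _
    rw [map_smul, hl]
    have : det (of (vecCons (A i.succ.succ) (vecCons w c))) = 0 := by
      apply det_zero_of_row_eq (i := 0) (j := i.succ.succ) (by simp [Fin.ext_iff])
      ext j
      simp [hA]
    simp [this]

/-- Adding `a` times each column to the next collapses a geometric first row of ratio `-a`. -/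
lemma det_geom_row {n : ℕ} (a s : ℂ) (c : Fin n → ℕ → ℂ) (A : Matrix (Fin (n + 1)) (Fin (n + 1)) ℂ)
    (h0 : ∀ m, A 0 m = s * (-a) ^ (m : ℕ)) (h1 : ∀ i m, A (Fin.succ i) m = c i m) :
    det A = s * det (of fun i m : Fin n => c i (m + 1) + a * c i m) := by
  let B : Matrix (Fin (n + 1)) (Fin (n + 1)) ℂ :=
    of fun i => Fin.cases (A i 0) (fun j => A i j.succ + a * A i j.castSucc)
  have hAB : det A = det B := by
    refine det_eq_of_forall_col_eq_smul_add_pred (fun _ => -a) (fun i => rfl) (fun i j => ?_)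
    simp [B]
  rw [hAB, det_succ_row_zero, Fin.sum_univ_succ, Finset.sum_eq_zero]
  · have hs : B.submatrix Fin.succ (Fin.succAbove 0) =
        of fun i m : Fin n => c i (m + 1) + a * c i m := by
      ext i m
      simp [B, h1]
    rw [hs]
    simp [B, h0]
  · intro m _
    have : B 0 m.succ = 0 := by
      simp [B, h0]
      ring
    simp [this]

lemma det_last_row {n : ℕ} (c : Fin n → ℕ → ℂ) (A : Matrix (Fin (n + 1)) (Fin (n + 1)) ℂ)
    (h0 : ∀ m, A 0 m = if (m : ℕ) = n then 1 else 0) (h1 : ∀ i m, A (Fin.succ i) m = c i m) :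
    det A = (-1) ^ n * det (of fun i m : Fin n => c i m) := by
  rw [det_succ_row_zero, Finset.sum_eq_single (Fin.last n)]
  · have hs : A.submatrix Fin.succ (Fin.succAbove (Fin.last n)) = of fun i m : Fin n => c i m := by
      ext i m
      simp [h1]
    rw [hs]
    simp [h0]
  · intro m _ hm
    have : (m : ℕ) ≠ n := fun h => hm (Fin.ext h)
    simp [h0, this]
  · simp

/-- Hirota–Miwa equation for arbitrary sequences, in the shifts `c(m) ↦ c(m + 1) + b c(m)`. -/
lemma hirota_seq {n : ℕ} (c : Fin n → ℕ → ℂ) (b : Fin 3 → ℂ)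
    (F : Fin 3 → ℂ) (G : Fin 3 → Fin 3 → ℂ)
    (hF : ∀ i, F i = det (of fun j m : Fin n => c j (m + 1) + b i * c j m))
    (hG : ∀ p q, G p q = det (of fun j m : Fin n =>
      c j (m + 2) + (b p + b q) * c j (m + 1) + b p * b q * c j m)) :
    (b 0 - b 1) * F 2 * G 0 1 + (b 1 - b 2) * F 0 * G 1 2 + (b 2 - b 0) * F 1 * G 0 2 = 0 := by
  let C : Fin n → Fin (n + 2) → ℂ := fun j m => c j m
  let e : Fin 3 → Fin (n + 2) → ℂ := fun i m => (-b i) ^ (m : ℕ)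
  let o : Fin (n + 2) → ℂ := fun m => if (m : ℕ) = n + 1 then 1 else 0
  have hee : ∀ p q, det (of (vecCons (e p) (vecCons (e q) C))) = (b p - b q) * G p q := by
    intro p q
    rw [det_geom_row (b p) 1 (vecCons (fun m => (-b q) ^ m) c) _ (by simp [e])
      (fun i m => by refine Fin.cases ?_ (fun i => ?_) i <;> simp [e, C]),
      det_geom_row (b q) (b p - b q) (fun j m => c j (m + 1) + b p * c j m) _
      (fun m => by simp; ring) (fun i m => by simp), one_mul, hG]
    congr 3
    ext j m
    ring
  have heo : ∀ p, det (of (vecCons (e p) (vecCons o C))) = (-1) ^ n * F p := by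
    intro p
    rw [det_geom_row (b p) 1 (vecCons (fun m => if m = n + 1 then 1 else 0) c) _ (by simp [e])
      (fun i m => by refine Fin.cases ?_ (fun i => ?_) i <;> simp [o, C]),
      det_last_row (fun j m => c j (m + 1) + b p * c j m) _
      (fun m => by
        have : (m : ℕ) ≠ n + 1 := by omega
        simp [this]) (fun i m => by simp), one_mul, hF]
  have h := plucker C (e 0) (e 1) (e 2) o
  rw [hee, hee, hee, heo, heo, heo] at h
  have hs : G 2 1 = G 1 2 := by
    rw [hG, hG]
    congr 2
    ext j m
    ring
  rw [hs] at h
  have h1 : ((-1 : ℂ) ^ n) ≠ 0 := pow_ne_zero _ (by norm_num)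
  apply mul_left_cancel₀ h1
  linear_combination h

/-- The Casoratian as a function of the weights `u`, `v` of the two exponentials in each row. -/
noncomputable def wdet {N : ℕ} (a : ℂ) (k u v : Fin N → ℂ) : ℂ :=
  det (of fun j m : Fin N => u j * (a + k j) ^ (m : ℕ) + v j * (a - k j) ^ (m : ℕ))

lemma wdet_scale {N : ℕ} (a : ℂ) (k u v s : Fin N → ℂ) :
    wdet a k (fun j => s j * u j) (fun j => s j * v j) = (∏ j, s j) * wdet a k u v := by
  unfold wdet
  rw [← det_mul_column]
  congr 1
  ext j m
  simp
  ring

lemma wdet_hirota {N : ℕ} (a : ℂ) (k u v : Fin N → ℂ) (b1 b2 b3 : ℂ) :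
    (b1 - b2) * wdet a k (fun j => u j * (b3 + k j)) (fun j => v j * (b3 - k j)) *
        wdet a k (fun j => u j * (b1 + k j) * (b2 + k j)) (fun j => v j * (b1 - k j) * (b2 - k j)) +
      (b2 - b3) * wdet a k (fun j => u j * (b1 + k j)) (fun j => v j * (b1 - k j)) *
        wdet a k (fun j => u j * (b2 + k j) * (b3 + k j)) (fun j => v j * (b2 - k j) * (b3 - k j)) +
      (b3 - b1) * wdet a k (fun j => u j * (b2 + k j)) (fun j => v j * (b2 - k j)) *
        wdet a k (fun j => u j * (b1 + k j) * (b3 + k j)) (fun j => v j * (b1 - k j) * (b3 - k j))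
      = 0 := by
  let b : Fin 3 → ℂ := ![b1, b2, b3]
  -- The nodes are `a ± k j`, so a weight `b ± k j` is the sequence shift with parameter `b - a`.
  have h := hirota_seq (fun j m => u j * (a + k j) ^ m + v j * (a - k j) ^ m) (fun i => b i - a)
    (fun i => wdet a k (fun j => u j * (b i + k j)) (fun j => v j * (b i - k j)))
    (fun p q => wdet a k (fun j => u j * (b p + k j) * (b q + k j))
      (fun j => v j * (b p - k j) * (b q - k j)))
    (fun i => by
      unfold wdet
      congr 2
      ext j m
      ring)
    (fun p q => by
      unfold wdet
      congr 2
      ext j m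
      ring)
  simp only [b, cons_val] at h
  linear_combination h

/-- The Hirota–Miwa equation with `b3` replaced by `-b3`, over weights already shifted by `b3`. -/
lemma wdet_reflected {N : ℕ} (a : ℂ) (k u v : Fin N → ℂ) (b1 b2 b3 : ℂ)
    (hb : ∀ j, b3 + k j ≠ 0) (hb' : ∀ j, b3 - k j ≠ 0) :
    (b1 - b2) * wdet a k (fun j => u j * (b1 + k j) * (b2 + k j) * (b3 + k j))
          (fun j => v j * (b1 - k j) * (b2 - k j) * (b3 - k j)) * wdet a k u v +
      (b2 + b3) * wdet a k (fun j => u j * (b1 + k j) * (b3 + k j))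
          (fun j => v j * (b1 - k j) * (b3 - k j)) *
        wdet a k (fun j => u j * (b2 + k j)) (fun j => v j * (b2 - k j)) -
      (b1 + b3) * wdet a k (fun j => u j * (b2 + k j) * (b3 + k j))
          (fun j => v j * (b2 - k j) * (b3 - k j)) *
        wdet a k (fun j => u j * (b1 + k j)) (fun j => v j * (b1 - k j)) = 0 := by
  have h := wdet_hirota a k (fun j => u j * (b3 + k j)) (fun j => v j * (b3 - k j)) b1 b2 (-b3)
  let s : Fin N → ℂ := fun j => -((b3 + k j) * (b3 - k j))
  have hs : ∏ j, s j ≠ 0 :=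
    Finset.prod_ne_zero_iff.2 fun j _ => neg_ne_zero.2 (mul_ne_zero (hb j) (hb' j))
  have e0 := wdet_scale a k u v s
  have e1 := wdet_scale a k (fun j => u j * (b1 + k j)) (fun j => v j * (b1 - k j)) s
  have e2 := wdet_scale a k (fun j => u j * (b2 + k j)) (fun j => v j * (b2 - k j)) s
  apply mul_left_cancel₀ hs
  have r0 : wdet a k (fun j => u j * (b3 + k j) * (-b3 + k j))
      (fun j => v j * (b3 - k j) * (-b3 - k j)) = (∏ j, s j) * wdet a k u v := by
    rw [← e0]; congr 1 <;> (ext j; simp only [s]; ring)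
  have r1 : wdet a k (fun j => u j * (b3 + k j) * (b1 + k j) * (-b3 + k j))
      (fun j => v j * (b3 - k j) * (b1 - k j) * (-b3 - k j)) = (∏ j, s j) *
      wdet a k (fun j => u j * (b1 + k j)) (fun j => v j * (b1 - k j)) := by
    rw [← e1]; congr 1 <;> (ext j; simp only [s]; ring)
  have r2 : wdet a k (fun j => u j * (b3 + k j) * (b2 + k j) * (-b3 + k j))
      (fun j => v j * (b3 - k j) * (b2 - k j) * (-b3 - k j)) = (∏ j, s j) *
      wdet a k (fun j => u j * (b2 + k j)) (fun j => v j * (b2 - k j)) := by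
    rw [← e2]; congr 1 <;> (ext j; simp only [s]; ring)
  have r3 : wdet a k (fun j => u j * (b3 + k j) * (b1 + k j) * (b2 + k j))
      (fun j => v j * (b3 - k j) * (b1 - k j) * (b2 - k j)) =
      wdet a k (fun j => u j * (b1 + k j) * (b2 + k j) * (b3 + k j))
        (fun j => v j * (b1 - k j) * (b2 - k j) * (b3 - k j)) := by
    congr 1 <;> (ext j; ring)
  have r4 : ∀ b, wdet a k (fun j => u j * (b3 + k j) * (b + k j))
      (fun j => v j * (b3 - k j) * (b - k j)) =
      wdet a k (fun j => u j * (b + k j) * (b3 + k j))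
        (fun j => v j * (b - k j) * (b3 - k j)) := by
    intro b; congr 1 <;> (ext j; ring)
  rw [r0, r1, r2, r3, r4 b1, r4 b2] at h
  linear_combination h

/-- The derivative of `wdet` at the weights `u`, `v` when these vary with logarithmic derivatives
`1 / (b + k j)` and `1 / (b - k j)`. -/
noncomputable def dwdet {N : ℕ} (a b : ℂ) (k u v : Fin N → ℂ) : ℂ :=
  fderiv ℝ (fun M : Fin N → Fin N → ℂ => det (of M))
    (fun j m => u j * (a + k j) ^ (m : ℕ) + v j * (a - k j) ^ (m : ℕ))
    (fun j m => u j * (1 / (b + k j)) * (a + k j) ^ (m : ℕ) +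
      v j * (1 / (b - k j)) * (a - k j) ^ (m : ℕ))

lemma hasDerivAt_wdet {N : ℕ} (a b : ℂ) (k u v : Fin N → ℂ) (U V : ℝ → Fin N → ℂ) (t : ℝ)
    (hu : U t = u) (hv : V t = v)
    (hU : ∀ j, HasDerivAt (fun t => U t j) (u j * (1 / (b + k j))) t)
    (hV : ∀ j, HasDerivAt (fun t => V t j) (v j * (1 / (b - k j))) t) :
    HasDerivAt (fun t => wdet a k (U t) (V t)) (dwdet a b k u v) t := by
  have hd : Differentiable ℝ (fun M : Fin N → Fin N → ℂ => det (of M)) := by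
    simp only [det_apply, of_apply]
    fun_prop
  have hM : HasDerivAt (fun t (j m : Fin N) =>
      U t j * (a + k j) ^ (m : ℕ) + V t j * (a - k j) ^ (m : ℕ))
      (fun j m => u j * (1 / (b + k j)) * (a + k j) ^ (m : ℕ) +
        v j * (1 / (b - k j)) * (a - k j) ^ (m : ℕ)) t := by
    refine hasDerivAt_pi.2 fun j => hasDerivAt_pi.2 fun m => ?_
    exact ((hU j).mul_const _).add ((hV j).mul_const _)
  have := (hd (fun j m => U t j * (a + k j) ^ (m : ℕ) +
    V t j * (a - k j) ^ (m : ℕ))).hasFDerivAt.comp_hasDerivAt t hM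
  rw [hu, hv] at this
  exact this

/-- Moving the parameter `b` of one shift has the same effect as the `y`-flow. -/
lemma hasDerivAt_wdet_param {N : ℕ} (a b : ℂ) (k u v : Fin N → ℂ)
    (hb : ∀ j, b + k j ≠ 0) (hb' : ∀ j, b - k j ≠ 0) :
    HasDerivAt (fun t : ℝ => wdet a k (fun j => u j * (b + t + k j)) (fun j => v j * (b + t - k j)))
      (dwdet a b k (fun j => u j * (b + k j)) (fun j => v j * (b - k j))) 0 := by
  have ht : HasDerivAt (fun t : ℝ => (t : ℂ)) 1 0 := Complex.ofRealCLM.hasDerivAt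
  apply hasDerivAt_wdet
  · simp
  · simp
  · intro j
    have h := ((ht.const_add b).add_const (k j)).const_mul (u j)
    refine h.congr_deriv ?_
    have := hb j
    field
  · intro j
    have h := ((ht.const_add b).sub_const (k j)).const_mul (v j)
    refine h.congr_deriv ?_
    have := hb' j
    field

/-- The derivative of the Hirota–Miwa equation in its third parameter. -/
lemma wdet_hirota_deriv {N : ℕ} (a : ℂ) (k u v : Fin N → ℂ) (b1 b2 b3 : ℂ)
    (hb : ∀ j, b3 + k j ≠ 0) (hb' : ∀ j, b3 - k j ≠ 0) :
    (b1 - b2) * dwdet a b3 k (fun j => u j * (b3 + k j)) (fun j => v j * (b3 - k j)) *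
        wdet a k (fun j => u j * (b1 + k j) * (b2 + k j)) (fun j => v j * (b1 - k j) * (b2 - k j)) +
      wdet a k (fun j => u j * (b1 + k j)) (fun j => v j * (b1 - k j)) *
        ((b2 - b3) * dwdet a b3 k (fun j => u j * (b2 + k j) * (b3 + k j))
          (fun j => v j * (b2 - k j) * (b3 - k j)) -
          wdet a k (fun j => u j * (b2 + k j) * (b3 + k j))
            (fun j => v j * (b2 - k j) * (b3 - k j))) +
      wdet a k (fun j => u j * (b2 + k j)) (fun j => v j * (b2 - k j)) *
        ((b3 - b1) * dwdet a b3 k (fun j => u j * (b1 + k j) * (b3 + k j))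
          (fun j => v j * (b1 - k j) * (b3 - k j)) +
          wdet a k (fun j => u j * (b1 + k j) * (b3 + k j))
            (fun j => v j * (b1 - k j) * (b3 - k j)))
      = 0 := by
  have ht : HasDerivAt (fun t : ℝ => (t : ℂ)) 1 0 := Complex.ofRealCLM.hasDerivAt
  have d0 := hasDerivAt_wdet_param a b3 k u v hb hb'
  have d1 := hasDerivAt_wdet_param a b3 k (fun j => u j * (b1 + k j)) (fun j => v j * (b1 - k j))
    hb hb'
  have d2 := hasDerivAt_wdet_param a b3 k (fun j => u j * (b2 + k j)) (fun j => v j * (b2 - k j))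
    hb hb'
  have h3 := ht.const_add b3
  have H := (((d0.const_mul (b1 - b2)).mul_const (wdet a k (fun j => u j * (b1 + k j) * (b2 + k j))
      (fun j => v j * (b1 - k j) * (b2 - k j)))).add
    (((h3.const_sub b2).mul_const
      (wdet a k (fun j => u j * (b1 + k j)) (fun j => v j * (b1 - k j)))).mul d2)).add
    (((h3.sub_const b1).mul_const
      (wdet a k (fun j => u j * (b2 + k j)) (fun j => v j * (b2 - k j)))).mul d1)
  have H0 := H.congr_of_eventuallyEq (f₁ := fun _ => 0)
    (Filter.Eventually.of_forall fun t => (wdet_hirota a k u v b1 b2 (b3 + t)).symm)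
  have := H0.unique (hasDerivAt_const (0 : ℝ) (0 : ℂ))
  simp only [Complex.ofReal_zero, add_zero] at this
  linear_combination this

/-- The derivative of `wdet_reflected` in its third parameter. -/
lemma wdet_reflected_deriv {N : ℕ} (a : ℂ) (k u v : Fin N → ℂ) (b1 b2 b3 : ℂ)
    (hb : ∀ j, b3 + k j ≠ 0) (hb' : ∀ j, b3 - k j ≠ 0) :
    (b1 - b2) * dwdet a b3 k (fun j => u j * (b1 + k j) * (b2 + k j) * (b3 + k j))
          (fun j => v j * (b1 - k j) * (b2 - k j) * (b3 - k j)) * wdet a k u v +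
      wdet a k (fun j => u j * (b2 + k j)) (fun j => v j * (b2 - k j)) *
        ((b2 + b3) * dwdet a b3 k (fun j => u j * (b1 + k j) * (b3 + k j))
          (fun j => v j * (b1 - k j) * (b3 - k j)) +
          wdet a k (fun j => u j * (b1 + k j) * (b3 + k j))
            (fun j => v j * (b1 - k j) * (b3 - k j))) -
      wdet a k (fun j => u j * (b1 + k j)) (fun j => v j * (b1 - k j)) *
        ((b1 + b3) * dwdet a b3 k (fun j => u j * (b2 + k j) * (b3 + k j))
          (fun j => v j * (b2 - k j) * (b3 - k j)) +
          wdet a k (fun j => u j * (b2 + k j) * (b3 + k j))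
            (fun j => v j * (b2 - k j) * (b3 - k j)))
      = 0 := by
  have ht : HasDerivAt (fun t : ℝ => (t : ℂ)) 1 0 := Complex.ofRealCLM.hasDerivAt
  have d0 := hasDerivAt_wdet_param a b3 k (fun j => u j * (b1 + k j) * (b2 + k j))
    (fun j => v j * (b1 - k j) * (b2 - k j)) hb hb'
  have d1 := hasDerivAt_wdet_param a b3 k (fun j => u j * (b1 + k j)) (fun j => v j * (b1 - k j))
    hb hb'
  have d2 := hasDerivAt_wdet_param a b3 k (fun j => u j * (b2 + k j)) (fun j => v j * (b2 - k j))
    hb hb'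
  have h3 := ht.const_add b3
  have H := (((d0.const_mul (b1 - b2)).mul_const (wdet a k u v)).add
    (((h3.const_add b2).mul d1).mul_const
      (wdet a k (fun j => u j * (b2 + k j)) (fun j => v j * (b2 - k j))))).sub
    (((h3.const_add b1).mul d2).mul_const
      (wdet a k (fun j => u j * (b1 + k j)) (fun j => v j * (b1 - k j))))
  have hne : ∀ᶠ t : ℝ in nhds 0, ∀ j, b3 + (t : ℂ) + k j ≠ 0 ∧ b3 + (t : ℂ) - k j ≠ 0 := by
    refine Filter.eventually_all.2 fun j => Filter.Eventually.and ?_ ?_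
    · exact ContinuousAt.eventually_ne (g := fun t : ℝ => b3 + (t : ℂ) + k j)
        (by fun_prop) (by simpa using hb j)
    · exact ContinuousAt.eventually_ne (g := fun t : ℝ => b3 + (t : ℂ) - k j)
        (by fun_prop) (by simpa using hb' j)
  have H0 := H.congr_of_eventuallyEq (f₁ := fun _ => 0) (hne.mono fun t h =>
    (wdet_reflected a k u v b1 b2 (b3 + t) (fun j => (h j).1) (fun j => (h j).2)).symm)
  have := H0.unique (hasDerivAt_const (0 : ℝ) (0 : ℂ))
  simp only [Complex.ofReal_zero, add_zero] at this
  linear_combination this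


/-- The Casoratian (in direction `n1`) with entries carrying the auxiliary continuous
variable `y` satisfies the bilinear Q1 (linear background) system 𝒬0 = 𝒬1 = 𝒬2 = 𝒬3 = 𝒬4 = 0. -/
theorem stmt_9 (N : ℕ) (hN : 1 ≤ N) (a1 a2 a3 : ℂ) (k ρp ρm : Fin N → ℂ)
    (ha1 : ∀ j, a1 + k j ≠ 0) (ha1' : ∀ j, a1 - k j ≠ 0)
    (ha2 : ∀ j, a2 + k j ≠ 0) (ha2' : ∀ j, a2 - k j ≠ 0)
    (ha3 : ∀ j, a3 + k j ≠ 0) (ha3' : ∀ j, a3 - k j ≠ 0)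
    (ψ : Fin N → ℤ → ℤ → ℤ → ℝ → ℂ)
    (hψ : ∀ j n1 n2 n3 y, ψ j n1 n2 n3 y =
      ρp j * Complex.exp ((y : ℂ) / (a3 + k j)) *
        (a1 + k j) ^ n1 * (a2 + k j) ^ n2 * (a3 + k j) ^ n3 +
      ρm j * Complex.exp ((y : ℂ) / (a3 - k j)) *
        (a1 - k j) ^ n1 * (a2 - k j) ^ n2 * (a3 - k j) ^ n3)
    (f : ℤ → ℤ → ℤ → ℝ → ℂ)
    (hf : ∀ n1 n2 n3 y, f n1 n2 n3 y =
      (Matrix.of fun j m : Fin N => ψ j (n1 + (m.1 : ℤ)) n2 n3 y).det) :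
    ∀ n1 n2 n3 : ℤ, ∀ y : ℝ,
      ((a1 - a2) * f n1 n2 (n3 + 1) y * f (n1 + 1) (n2 + 1) n3 y +
        (a2 - a3) * f (n1 + 1) n2 n3 y * f n1 (n2 + 1) (n3 + 1) y +
        (a3 - a1) * f n1 (n2 + 1) n3 y * f (n1 + 1) n2 (n3 + 1) y = 0) ∧
      ((a2 - a3) * f (n1 + 1) (n2 + 1) (n3 + 1) y * f n1 n2 n3 y +
        (a1 + a3) * f (n1 + 1) (n2 + 1) n3 y * f n1 n2 (n3 + 1) y -
        (a1 + a2) * f (n1 + 1) n2 (n3 + 1) y * f n1 (n2 + 1) n3 y = 0) ∧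
      ((a1 - a2) * f (n1 + 1) (n2 + 1) (n3 + 1) y * f n1 n2 n3 y +
        (a2 + a3) * f (n1 + 1) n2 (n3 + 1) y * f n1 (n2 + 1) n3 y -
        (a1 + a3) * f n1 (n2 + 1) (n3 + 1) y * f (n1 + 1) n2 n3 y = 0) ∧
      (2 * f (n1 + 1) n2 n3 y * f n1 (n2 + 1) (n3 + 1) y -
        2 * f (n1 + 1) n2 (n3 + 1) y * f n1 (n2 + 1) n3 y +
        (a3 - a1) * (deriv (fun t => f n1 (n2 + 1) n3 t) y * f (n1 + 1) n2 (n3 + 1) y -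
          f n1 (n2 + 1) n3 y * deriv (fun t => f (n1 + 1) n2 (n3 + 1) t) y) +
        (a2 - a3) * (deriv (fun t => f (n1 + 1) n2 n3 t) y * f n1 (n2 + 1) (n3 + 1) y -
          f (n1 + 1) n2 n3 y * deriv (fun t => f n1 (n2 + 1) (n3 + 1) t) y) -
        (a1 - a2) * (deriv (fun t => f n1 n2 (n3 + 1) t) y * f (n1 + 1) (n2 + 1) n3 y -
          f n1 n2 (n3 + 1) y * deriv (fun t => f (n1 + 1) (n2 + 1) n3 t) y) = 0) ∧
      (2 * f n1 (n2 + 1) (n3 + 1) y * f (n1 + 1) n2 n3 y -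
        2 * f (n1 + 1) n2 (n3 + 1) y * f n1 (n2 + 1) n3 y -
        (a1 + a3) * (deriv (fun t => f (n1 + 1) n2 n3 t) y * f n1 (n2 + 1) (n3 + 1) y -
          f (n1 + 1) n2 n3 y * deriv (fun t => f n1 (n2 + 1) (n3 + 1) t) y) +
        (a2 + a3) * (deriv (fun t => f n1 (n2 + 1) n3 t) y * f (n1 + 1) n2 (n3 + 1) y -
          f n1 (n2 + 1) n3 y * deriv (fun t => f (n1 + 1) n2 (n3 + 1) t) y) +
        (a1 - a2) * (deriv (fun t => f n1 n2 n3 t) y * f (n1 + 1) (n2 + 1) (n3 + 1) y -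
          f n1 n2 n3 y * deriv (fun t => f (n1 + 1) (n2 + 1) (n3 + 1) t) y) = 0) := by
  intro n1 n2 n3 y
  let U : ℤ → ℤ → ℤ → ℝ → Fin N → ℂ := fun n1 n2 n3 t j =>
    ρp j * Complex.exp ((t : ℂ) / (a3 + k j)) *
      (a1 + k j) ^ n1 * (a2 + k j) ^ n2 * (a3 + k j) ^ n3
  let V : ℤ → ℤ → ℤ → ℝ → Fin N → ℂ := fun n1 n2 n3 t j =>
    ρm j * Complex.exp ((t : ℂ) / (a3 - k j)) *
      (a1 - k j) ^ n1 * (a2 - k j) ^ n2 * (a3 - k j) ^ n3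
  have hfw : ∀ n1 n2 n3 t, f n1 n2 n3 t = wdet a1 k (U n1 n2 n3 t) (V n1 n2 n3 t) := by
    intro n1 n2 n3 t
    rw [hf, wdet]
    congr 2
    ext j m
    rw [hψ, zpow_add₀ (ha1 j), zpow_add₀ (ha1' j), zpow_natCast, zpow_natCast]
    simp only [U, V]
    ring
  have hfd : ∀ n1 n2 n3, HasDerivAt (fun t => f n1 n2 n3 t)
      (dwdet a1 a3 k (U n1 n2 n3 y) (V n1 n2 n3 y)) y := by
    intro n1 n2 n3
    simp only [hfw]
    have ht : HasDerivAt (fun t : ℝ => (t : ℂ)) 1 y := Complex.ofRealCLM.hasDerivAt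
    refine hasDerivAt_wdet a1 a3 k _ _ (U n1 n2 n3) (V n1 n2 n3) y rfl rfl (fun j => ?_)
      (fun j => ?_)
    · have h := ((((ht.div_const (a3 + k j)).cexp.const_mul (ρp j)).mul_const
        ((a1 + k j) ^ n1)).mul_const ((a2 + k j) ^ n2)).mul_const ((a3 + k j) ^ n3)
      refine h.congr_deriv ?_
      simp only [U]
      ring
    · have h := ((((ht.div_const (a3 - k j)).cexp.const_mul (ρm j)).mul_const
        ((a1 - k j) ^ n1)).mul_const ((a2 - k j) ^ n2)).mul_const ((a3 - k j) ^ n3)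
      refine h.congr_deriv ?_
      simp only [V]
      ring
  have U1 : ∀ n1 n2 n3 t, U (n1 + 1) n2 n3 t = fun j => U n1 n2 n3 t j * (a1 + k j) := by
    intro n1 n2 n3 t; ext j; simp only [U]; rw [zpow_add_one₀ (ha1 j)]; ring
  have U2 : ∀ n1 n2 n3 t, U n1 (n2 + 1) n3 t = fun j => U n1 n2 n3 t j * (a2 + k j) := by
    intro n1 n2 n3 t; ext j; simp only [U]; rw [zpow_add_one₀ (ha2 j)]; ring
  have U3 : ∀ n1 n2 n3 t, U n1 n2 (n3 + 1) t = fun j => U n1 n2 n3 t j * (a3 + k j) := by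
    intro n1 n2 n3 t; ext j; simp only [U]; rw [zpow_add_one₀ (ha3 j)]; ring
  have V1 : ∀ n1 n2 n3 t, V (n1 + 1) n2 n3 t = fun j => V n1 n2 n3 t j * (a1 - k j) := by
    intro n1 n2 n3 t; ext j; simp only [V]; rw [zpow_add_one₀ (ha1' j)]; ring
  have V2 : ∀ n1 n2 n3 t, V n1 (n2 + 1) n3 t = fun j => V n1 n2 n3 t j * (a2 - k j) := by
    intro n1 n2 n3 t; ext j; simp only [V]; rw [zpow_add_one₀ (ha2' j)]; ring
  have V3 : ∀ n1 n2 n3 t, V n1 n2 (n3 + 1) t = fun j => V n1 n2 n3 t j * (a3 - k j) := by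
    intro n1 n2 n3 t; ext j; simp only [V]; rw [zpow_add_one₀ (ha3' j)]; ring
  clear_value U V
  have U12 : ∀ t, U (n1 + 1) (n2 + 1) n3 t =
      fun j => U n1 n2 n3 t j * (a1 + k j) * (a2 + k j) := by
    intro t; rw [U2]; simp only [U1]
  have U13 : ∀ t, U (n1 + 1) n2 (n3 + 1) t =
      fun j => U n1 n2 n3 t j * (a1 + k j) * (a3 + k j) := by
    intro t; rw [U3]; simp only [U1]
  have U23 : ∀ t, U n1 (n2 + 1) (n3 + 1) t =
      fun j => U n1 n2 n3 t j * (a2 + k j) * (a3 + k j) := by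
    intro t; rw [U3]; simp only [U2]
  have U123 : ∀ t, U (n1 + 1) (n2 + 1) (n3 + 1) t =
      fun j => U n1 n2 n3 t j * (a1 + k j) * (a2 + k j) * (a3 + k j) := by
    intro t; rw [U3]; simp only [U12]
  have U21 : ∀ t, U (n1 + 1) (n2 + 1) n3 t =
      fun j => U n1 n2 n3 t j * (a2 + k j) * (a1 + k j) := by
    intro t; rw [U1]; simp only [U2]
  have U31 : ∀ t, U (n1 + 1) n2 (n3 + 1) t =
      fun j => U n1 n2 n3 t j * (a3 + k j) * (a1 + k j) := by
    intro t; rw [U1]; simp only [U3]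
  have U231 : ∀ t, U (n1 + 1) (n2 + 1) (n3 + 1) t =
      fun j => U n1 n2 n3 t j * (a2 + k j) * (a3 + k j) * (a1 + k j) := by
    intro t; rw [U1]; simp only [U23]
  have V12 : ∀ t, V (n1 + 1) (n2 + 1) n3 t =
      fun j => V n1 n2 n3 t j * (a1 - k j) * (a2 - k j) := by
    intro t; rw [V2]; simp only [V1]
  have V13 : ∀ t, V (n1 + 1) n2 (n3 + 1) t =
      fun j => V n1 n2 n3 t j * (a1 - k j) * (a3 - k j) := by
    intro t; rw [V3]; simp only [V1]
  have V23 : ∀ t, V n1 (n2 + 1) (n3 + 1) t =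
      fun j => V n1 n2 n3 t j * (a2 - k j) * (a3 - k j) := by
    intro t; rw [V3]; simp only [V2]
  have V123 : ∀ t, V (n1 + 1) (n2 + 1) (n3 + 1) t =
      fun j => V n1 n2 n3 t j * (a1 - k j) * (a2 - k j) * (a3 - k j) := by
    intro t; rw [V3]; simp only [V12]
  have V21 : ∀ t, V (n1 + 1) (n2 + 1) n3 t =
      fun j => V n1 n2 n3 t j * (a2 - k j) * (a1 - k j) := by
    intro t; rw [V1]; simp only [V2]
  have V31 : ∀ t, V (n1 + 1) n2 (n3 + 1) t =
      fun j => V n1 n2 n3 t j * (a3 - k j) * (a1 - k j) := by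
    intro t; rw [V1]; simp only [V3]
  have V231 : ∀ t, V (n1 + 1) (n2 + 1) (n3 + 1) t =
      fun j => V n1 n2 n3 t j * (a2 - k j) * (a3 - k j) * (a1 - k j) := by
    intro t; rw [V1]; simp only [V23]
  have q0 : ∀ t, (a1 - a2) * f n1 n2 (n3 + 1) t * f (n1 + 1) (n2 + 1) n3 t +
      (a2 - a3) * f (n1 + 1) n2 n3 t * f n1 (n2 + 1) (n3 + 1) t +
      (a3 - a1) * f n1 (n2 + 1) n3 t * f (n1 + 1) n2 (n3 + 1) t = 0 := by
    intro t
    rw [hfw, hfw, hfw, hfw, hfw, hfw, U12, U13, U23, V12, V13, V23, U1, U2, U3, V1, V2, V3]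
    exact wdet_hirota a1 k (U n1 n2 n3 t) (V n1 n2 n3 t) a1 a2 a3
  have q1 : (a2 - a3) * f (n1 + 1) (n2 + 1) (n3 + 1) y * f n1 n2 n3 y +
      (a1 + a3) * f (n1 + 1) (n2 + 1) n3 y * f n1 n2 (n3 + 1) y -
      (a1 + a2) * f (n1 + 1) n2 (n3 + 1) y * f n1 (n2 + 1) n3 y = 0 := by
    rw [hfw, hfw, hfw, hfw, hfw, hfw, U231, U21, U31, V231, V21, V31, U2, U3, V2, V3]
    linear_combination wdet_reflected a1 k (U n1 n2 n3 y) (V n1 n2 n3 y) a2 a3 a1 ha1 ha1'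
  have q2 : ∀ t, (a1 - a2) * f (n1 + 1) (n2 + 1) (n3 + 1) t * f n1 n2 n3 t +
      (a2 + a3) * f (n1 + 1) n2 (n3 + 1) t * f n1 (n2 + 1) n3 t -
      (a1 + a3) * f n1 (n2 + 1) (n3 + 1) t * f (n1 + 1) n2 n3 t = 0 := by
    intro t
    rw [hfw, hfw, hfw, hfw, hfw, hfw, U123, U13, U23, V123, V13, V23, U1, U2, V1, V2]
    exact wdet_reflected a1 k (U n1 n2 n3 t) (V n1 n2 n3 t) a1 a2 a3 ha3 ha3'
  have dq0 := (((((hfd n1 n2 (n3 + 1)).const_mul (a1 - a2)).mul (hfd (n1 + 1) (n2 + 1) n3)).add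
    (((hfd (n1 + 1) n2 n3).const_mul (a2 - a3)).mul (hfd n1 (n2 + 1) (n3 + 1)))).add
    (((hfd n1 (n2 + 1) n3).const_mul (a3 - a1)).mul
      (hfd (n1 + 1) n2 (n3 + 1)))).congr_of_eventuallyEq (f₁ := fun _ => 0)
    (Filter.Eventually.of_forall fun t => (q0 t).symm) |>.unique (hasDerivAt_const y (0 : ℂ))
  have dq2 := (((((hfd (n1 + 1) (n2 + 1) (n3 + 1)).const_mul (a1 - a2)).mul (hfd n1 n2 n3)).add
    (((hfd (n1 + 1) n2 (n3 + 1)).const_mul (a2 + a3)).mul (hfd n1 (n2 + 1) n3))).sub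
    (((hfd n1 (n2 + 1) (n3 + 1)).const_mul (a1 + a3)).mul
      (hfd (n1 + 1) n2 n3))).congr_of_eventuallyEq (f₁ := fun _ => 0)
    (Filter.Eventually.of_forall fun t => (q2 t).symm) |>.unique (hasDerivAt_const y (0 : ℂ))
  -- `dq0`, `dq2` differentiate `𝒬0`, `𝒬2` in `y`; `A`, `B` differentiate them in the parameter `a3`.
  have A := wdet_hirota_deriv a1 k (U n1 n2 n3 y) (V n1 n2 n3 y) a1 a2 a3 ha3 ha3'
  have B := wdet_reflected_deriv a1 k (U n1 n2 n3 y) (V n1 n2 n3 y) a1 a2 a3 ha3 ha3'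
  rw [← U12, ← U13, ← U23, ← V12, ← V13, ← V23, ← U1, ← U2, ← U3, ← V1, ← V2, ← V3] at A
  rw [← U123, ← U13, ← U23, ← V123, ← V13, ← V23, ← U1, ← U2, ← V1, ← V2] at B
  simp only [← hfw] at A B
  refine ⟨q0 y, q1, q2 y, ?_, ?_⟩
  · simp only [(hfd _ _ _).deriv]
    linear_combination dq0 - 2 * A
  · simp only [(hfd _ _ _).deriv]
    linear_combination dq2 - 2 * B
end

section
/- Let f(n1,n2,n3,n4) be the Casoratian in the direction n1 of the vector ψ with entries ψ_j(n1,n2,n3,n4) = ρ_j^+ ∏_{i=1}^4 (a_i+k_j)^{n_i} + ρ_j^- ∏_{i=1}^4 (a_i−k_j)^{n_i}. Then f satisfies the bilinear Q3 (NQC) system at every point: (a1−a3) f f_134 − (a1+a4) f_1 f_34 + (a3+a4) f_14 f_3 = 0; (a2−a3) f f_234 − (a2+a4) f_2 f_34 + (a3+a4) f_24 f_3 = 0; (a2−a4) f f_234 − (a2+a3) f_2 f_34 + (a3+a4) f_4 f_23 = 0; and (a1−a4) f f_134 − (a1+a3) f_1 f_34 + (a3+a4) f_4 f_13 = 0. 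-/
/-!
Each row of the Casorati matrix of `ψ` is a linear functional on polynomials evaluated on a shifted
monomial basis: with `Y` standing for the shift in `n1`, which has the eigenvalues `a1 ± k j`, the
row is `p ↦ A j * p (a1 + k j) + B j * p (a1 - k j)` evaluated at `1, Y, Y ^ 2, …`, and a shift in
`n_i` multiplies the argument by `Y + (a_i - a1)`.

`hirota_miwa`: for every linear map `L` from polynomials to `Fin (n + 1) → ℂ`, the function
`F p = det (L (p * X ^ m))_m` satisfies the three-term relation
`(a - b) F(X+c) F((X+a)(X+b)) + cyclic = 0`.
The determinants `F((X+a)(X+b))` are values, at `(X+a)(X+b)`, of one functional `D` that vanishes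
on `L ((X+a)(X+b)(X+c) X ^ m)` for `m < n` (`casDet_eq_cons`). The determinants `F(X+c)` are values
`G(-c)` of a polynomial `G` with `L G = 0`, by Cramer's rule (`exists_annihilator`). Lagrange
interpolation of `G` at `-a, -b, -c` then shows that the sum is `D` of something in its kernel.

The Q3 equations are the instances of `hirota_miwa` with parameters `a`, `b` and the *reflected*
parameter `-c`: since `(k - c)(k + c)` takes the same value at `k j` and `-k j`, the factor
`(Y - a1 - c)(Y - a1 + c)` only rescales the rows, and this nonzero scaling is common to the three terms
(`q3_weights`).
-/

open Polynomial in
/-- The determinant with rows `L (p * X ^ m)`, `m = 0, …, N - 1`: the Casoratian attached to a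
linear map `L` on polynomials, after multiplication by `p`. -/
noncomputable def casDet {N : ℕ} (L : ℂ[X] →ₗ[ℂ] (Fin N → ℂ)) (p : ℂ[X]) : ℂ :=
  (Matrix.of fun m : Fin N => L (p * X ^ (m : ℕ))).det

open Polynomial in
/-- Row operations replace the basis `1, X, …, X ^ n` by `1, X + c, (X + c) X, …`. -/
lemma casDet_eq_cons {n : ℕ} (L : ℂ[X] →ₗ[ℂ] (Fin (n + 1) → ℂ)) (p : ℂ[X]) (c : ℂ) :
    casDet L p = (Matrix.of (Fin.cons (L p)
      (fun i : Fin n => L (p * (X + C c) * X ^ (i : ℕ))) :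
        Fin (n + 1) → Fin (n + 1) → ℂ)).det := by
  unfold casDet
  refine Matrix.det_eq_of_forall_row_eq_smul_add_pred (fun _ => -c) ?_ ?_
  · intro j
    simp
  · intro i j
    have h : L (p * (X + C c) * X ^ (i : ℕ)) =
        L (p * X ^ ((i : ℕ) + 1)) + c • L (p * X ^ (i : ℕ)) := by
      rw [← map_smul, ← map_add, smul_eq_C_mul]
      congr 1
      ring
    simp [h]

open Polynomial in
/-- Cramer's rule: the `n + 2` vectors `L 1, …, L (X ^ (n + 1))` in dimension `n + 1` satisfy a
linear relation whose coefficients are the maximal minors; read as a polynomial `G`, its value at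
`-c` is the determinant attached to `X + c`. -/
lemma exists_annihilator {n : ℕ} (L : ℂ[X] →ₗ[ℂ] (Fin (n + 1) → ℂ)) :
    ∃ G : ℂ[X], G.natDegree ≤ n + 1 ∧ L G = 0 ∧ ∀ c : ℂ, G.eval (-c) = casDet L (X + C c) := by
  let M : (Fin (n + 2) → ℂ) → Matrix (Fin (n + 2)) (Fin (n + 2)) ℂ := fun v =>
    Matrix.of fun i => Fin.cons (v i) (L (X ^ (i : ℕ)))
  let e : Fin (n + 2) → ℂ := fun i =>
    (-1) ^ (i : ℕ) * (Matrix.of fun r : Fin (n + 1) => L (X ^ (i.succAbove r : ℕ))).det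
  have hM : ∀ v, (M v).det = ∑ i, e i * v i := by
    intro v
    rw [Matrix.det_succ_column_zero]
    refine Finset.sum_congr rfl fun i _ => ?_
    have : (M v).submatrix i.succAbove Fin.succ =
        Matrix.of fun r : Fin (n + 1) => L (X ^ (i.succAbove r : ℕ)) := by
      ext r s
      simp [M]
    rw [this]
    simp only [M, e, Matrix.of_apply, Fin.cons_zero]
    ring
  refine ⟨∑ i, e i • X ^ (i : ℕ), ?_, ?_, ?_⟩
  · refine natDegree_sum_le_of_forall_le _ _ fun i _ => ?_
    refine (natDegree_smul_le _ _).trans ?_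
    rw [natDegree_X_pow]
    omega
  · ext j
    have h0 : (M fun i => L (X ^ (i : ℕ)) j).det = 0 := by
      refine Matrix.det_zero_of_column_eq (i := 0) (j := j.succ) (Fin.succ_ne_zero j).symm ?_
      intro i
      simp [M]
    rw [hM] at h0
    simpa [map_sum, map_smul, Finset.sum_apply] using h0
  · intro c
    have h1 : eval (-c) (∑ i, e i • X ^ (i : ℕ)) = (M fun i => (-c) ^ (i : ℕ)).det := by
      rw [hM]
      simp [eval_finsetSum]
    have h2 : (M fun i => (-c) ^ (i : ℕ)).det = (Matrix.of (Fin.cons (Fin.cons 1 (L 1))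
        (fun i : Fin (n + 1) => Fin.cons 0 (L ((X + C c) * X ^ (i : ℕ)))) :
          Fin (n + 2) → Fin (n + 2) → ℂ)).det := by
      refine Matrix.det_eq_of_forall_row_eq_smul_add_pred (fun _ => -c) ?_ ?_
      · intro j
        simp [M]
      · intro i j
        have h : L ((X + C c) * X ^ (i : ℕ)) =
            L (X ^ ((i : ℕ) + 1)) + c • L (X ^ (i : ℕ)) := by
          rw [← map_smul, ← map_add, smul_eq_C_mul]
          congr 1
          ring
        refine Fin.cases ?_ (fun s => ?_) j
        · simp [M, pow_succ']
        · simp [M, h]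
    rw [h1, h2, Matrix.det_succ_column_zero, Fin.sum_univ_succ]
    simp only [Matrix.of_apply, Fin.cons_zero, Fin.cons_succ, mul_zero, zero_mul,
      Finset.sum_const_zero, add_zero, Fin.val_zero, pow_zero, one_mul, casDet]
    congr 1

open Polynomial in
/-- A polynomial of degree at most `max 2 (n + 1)` with the three distinct roots `-a, -b, -c` is
`(X+a)(X+b)(X+c) h` where `h` has degree less than `n`. -/
lemma exists_cofactor {n : ℕ} {a b c : ℂ} (hab : a ≠ b) (hbc : b ≠ c) (hca : c ≠ a)
    (P : ℂ[X]) (hP : P.natDegree ≤ max 2 (n + 1)) (ha : P.eval (-a) = 0) (hb : P.eval (-b) = 0)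
    (hc : P.eval (-c) = 0) :
    ∃ r : ℕ → ℂ, P = ∑ i ∈ Finset.range n,
      r i • ((X + C a) * (X + C b) * (X + C c) * X ^ i) := by
  have dv : ∀ x : ℂ, P.eval (-x) = 0 → (X + C x) ∣ P := by
    intro x hx
    have := dvd_iff_isRoot.mpr (show P.IsRoot (-x) from hx)
    simpa using this
  have cop : ∀ x y : ℂ, x ≠ y → IsCoprime (X + C x : ℂ[X]) (X + C y) := by
    intro x y hxy
    have := isCoprime_X_sub_C_of_isUnit_sub (R := ℂ) (a := -x) (b := -y)
      (IsUnit.mk0 _ (by rw [sub_ne_zero]; simpa using hxy))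
    simpa using this
  obtain ⟨h, hh⟩ : (X + C a) * (X + C b) * (X + C c) ∣ P :=
    IsCoprime.mul_dvd (IsCoprime.mul_left (cop a c hca.symm) (cop b c hbc))
      (IsCoprime.mul_dvd (cop a b hab) (dv a ha) (dv b hb)) (dv c hc)
  refine ⟨h.coeff, ?_⟩
  by_cases h0 : h = 0
  · simp [hh, h0]
  have hm : ((X + C a) * (X + C b) * (X + C c) : ℂ[X]).Monic :=
    ((monic_X_add_C a).mul (monic_X_add_C b)).mul (monic_X_add_C c)
  have hd : ((X + C a) * (X + C b) * (X + C c) : ℂ[X]).natDegree = 3 := by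
    rw [((monic_X_add_C a).mul (monic_X_add_C b)).natDegree_mul (monic_X_add_C c),
      (monic_X_add_C a).natDegree_mul (monic_X_add_C b)]
    simp
  have hlt : h.natDegree < n := by
    rw [hh, hm.natDegree_mul' h0, hd] at hP
    omega
  rw [hh]
  conv_lhs => rw [h.as_sum_range' n hlt, Finset.mul_sum]
  refine Finset.sum_congr rfl fun i _ => ?_
  rw [← C_mul_X_pow_eq_monomial, smul_eq_C_mul]
  ring

open Polynomial in
/-- The Hirota–Miwa (discrete KP) relation for determinants of Casorati type. -/
lemma hirota_miwa {n : ℕ} (L : ℂ[X] →ₗ[ℂ] (Fin (n + 1) → ℂ)) (a b c : ℂ) :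
    (a - b) * casDet L (X + C c) * casDet L ((X + C a) * (X + C b)) +
    (b - c) * casDet L (X + C a) * casDet L ((X + C b) * (X + C c)) +
    (c - a) * casDet L (X + C b) * casDet L ((X + C a) * (X + C c)) = 0 := by
  -- if two parameters coincide, the relation is an antisymmetry
  by_cases hab : a = b
  · subst hab; ring
  by_cases hbc : b = c
  · subst hbc; ring
  by_cases hca : c = a
  · subst hca; rw [mul_comm (X + C c) (X + C b)]; ring
  obtain ⟨G, hGd, hG0, hG⟩ := exists_annihilator L
  let U : Fin n → (Fin (n + 1) → ℂ) := fun i =>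
    L ((X + C a) * (X + C b) * (X + C c) * X ^ (i : ℕ))
  let D : (Fin (n + 1) → ℂ) →ₗ[ℂ] ℂ :=
    (Matrix.detRowAlternating (R := ℂ) (n := Fin (n + 1))).toMultilinearMap.toLinearMap
      (Fin.cons 0 U) 0
  have hD : ∀ v, D v = (Matrix.of (Fin.cons v U : Fin (n + 1) → Fin (n + 1) → ℂ)).det := by
    intro v
    change Matrix.det (Function.update (Fin.cons 0 U : Fin (n + 1) → Fin (n + 1) → ℂ) 0 v) = _
    rw [Fin.update_cons_zero]
    rfl
  have hDU : ∀ i, D (U i) = 0 := by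
    intro i
    rw [hD]
    refine Matrix.det_zero_of_row_eq (i := 0) (j := i.succ) (Fin.succ_ne_zero i).symm ?_
    ext s
    simp
  have e1 : casDet L ((X + C a) * (X + C b)) = D (L ((X + C a) * (X + C b))) := by
    rw [hD, casDet_eq_cons L _ c]
  have e2 : casDet L ((X + C b) * (X + C c)) = D (L ((X + C b) * (X + C c))) := by
    rw [hD, casDet_eq_cons L _ a]
    simp only [U, show (X + C b) * (X + C c) * (X + C a) =
      (X + C a) * (X + C b) * (X + C c) by ring]
  have e3 : casDet L ((X + C a) * (X + C c)) = D (L ((X + C a) * (X + C c))) := by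
    rw [hD, casDet_eq_cons L _ b]
    simp only [U, show (X + C a) * (X + C c) * (X + C b) =
      (X + C a) * (X + C b) * (X + C c) by ring]
  -- up to the factor `-(a - b)(b - c)(c - a)`, `q` is the Lagrange interpolant of `G`
  let q : ℂ[X] := ((a - b) * G.eval (-c)) • ((X + C a) * (X + C b)) +
    ((b - c) * G.eval (-a)) • ((X + C b) * (X + C c)) +
    ((c - a) * G.eval (-b)) • ((X + C a) * (X + C c))
  have hq : q.natDegree ≤ 2 := by
    have d2 : ∀ t x y : ℂ, (t • ((X + C x) * (X + C y)) : ℂ[X]).natDegree ≤ 2 := by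
      intro t x y
      refine (natDegree_smul_le _ _).trans (natDegree_mul_le.trans ?_)
      simp
    exact natDegree_add_le_of_degree_le
      (natDegree_add_le_of_degree_le (d2 _ _ _) (d2 _ _ _)) (d2 _ _ _)
  obtain ⟨r, hr⟩ := exists_cofactor (n := n) hab hbc hca
    (q + ((a - b) * (b - c) * (c - a)) • G)
    (natDegree_add_le_of_le hq ((natDegree_smul_le _ _).trans hGd))
    (by simp [q]; ring) (by simp [q]; ring) (by simp [q]; ring)
  have hz : D (L q) = 0 := by
    have h1 := congrArg (fun p => D (L p)) hr
    simp only [map_add, map_smul, hG0, smul_zero, add_zero, map_sum] at h1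
    rw [h1]
    refine Finset.sum_eq_zero fun i hi => ?_
    have := hDU ⟨i, Finset.mem_range.mp hi⟩
    simp only [U] at this
    rw [this, smul_zero]
  simp only [q, map_add, map_smul, smul_eq_mul, hG, ← e1, ← e2, ← e3] at hz
  exact hz

/-- The Casoratian of `α j * x j ^ m + β j * y j ^ m` in `m`, as a function of the weights. -/
noncomputable def weightDet {N : ℕ} (x y α β : Fin N → ℂ) : ℂ :=
  (Matrix.of fun j m : Fin N => α j * x j ^ (m : ℕ) + β j * y j ^ (m : ℕ)).det

open Polynomial in
/-- The functional whose `j`-th component is `p ↦ α j * p (x j) + β j * p (y j)`. -/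
noncomputable def weightMap {N : ℕ} (x y α β : Fin N → ℂ) : ℂ[X] →ₗ[ℂ] (Fin N → ℂ) :=
  LinearMap.pi fun j => α j • leval (x j) + β j • leval (y j)

open Polynomial in
lemma casDet_weightMap {N : ℕ} (x y α β : Fin N → ℂ) (p : ℂ[X]) :
    casDet (weightMap x y α β) p =
      weightDet x y (fun j => α j * p.eval (x j)) (fun j => β j * p.eval (y j)) := by
  unfold casDet weightDet
  rw [← Matrix.det_transpose]
  congr 1
  ext j m
  simp [weightMap, leval, mul_assoc]

lemma weightDet_smul {N : ℕ} (x y α β s : Fin N → ℂ) :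
    weightDet x y (fun j => s j * α j) (fun j => s j * β j) =
      (∏ j, s j) * weightDet x y α β := by
  unfold weightDet
  rw [← Matrix.det_mul_column]
  congr 1
  ext j m
  simp only [Matrix.of_apply]
  ring

open Polynomial in
/-- The common form of the four equations: a Hirota–Miwa relation with parameters `a`, `b` and the
reflected parameter `-c`. The offset `d` records the direction in which the Casoratian is taken. -/
lemma q3_weights {N : ℕ} (hN : 1 ≤ N) (k A B : Fin N → ℂ) (d a b c : ℂ)
    (hc : ∀ j, c + k j ≠ 0) (hc' : ∀ j, c - k j ≠ 0) (W : (Fin N → ℂ) → (Fin N → ℂ) → ℂ)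
    (hW : W = weightDet (fun j => d + k j) (fun j => d - k j)) :
    (a - b) * W A B *
        W (fun j => A j * (a + k j) * (b + k j) * (c + k j))
          (fun j => B j * (a - k j) * (b - k j) * (c - k j)) -
      (a + c) * W (fun j => A j * (a + k j)) (fun j => B j * (a - k j)) *
        W (fun j => A j * (b + k j) * (c + k j)) (fun j => B j * (b - k j) * (c - k j)) +
      (b + c) * W (fun j => A j * (a + k j) * (c + k j)) (fun j => B j * (a - k j) * (c - k j)) *
        W (fun j => A j * (b + k j)) (fun j => B j * (b - k j)) = 0 := by
  obtain ⟨n, rfl⟩ : ∃ n, N = n + 1 := ⟨N - 1, by omega⟩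
  let s : Fin (n + 1) → ℂ := fun j => (k j - c) * (k j + c)
  have hs : ∏ j, s j ≠ 0 := by
    refine Finset.prod_ne_zero_iff.mpr fun j _ => mul_ne_zero ?_ ?_
    · intro h
      exact hc' j (by linear_combination -h)
    · intro h
      exact hc j (by linear_combination h)
  have key := hirota_miwa (weightMap (fun j => d + k j) (fun j => d - k j)
    (fun j => A j * (c + k j)) (fun j => B j * (c - k j))) (a - d) (b - d) (-c - d)
  simp only [casDet_weightMap, ← hW, eval_mul, eval_add, eval_X, eval_C] at key
  have hsm : ∀ α β : Fin (n + 1) → ℂ, W (fun j => s j * α j) (fun j => s j * β j) =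
      (∏ j, s j) * W α β := by
    intro α β
    rw [hW, weightDet_smul]
  have cW : ∀ {α α' β β' : Fin (n + 1) → ℂ}, (∀ j, α j = α' j) → (∀ j, β j = β' j) →
      W α β = W α' β' := fun h h' => by rw [funext h, funext h']
  have r1 : W (fun j => A j * (c + k j) * (d + k j + (-c - d)))
      (fun j => B j * (c - k j) * (d - k j + (-c - d))) = (∏ j, s j) * W A B := by
    rw [← hsm]
    exact cW (fun j => by simp only [s]; ring) (fun j => by simp only [s]; ring)
  have r2 : W (fun j => A j * (c + k j) * ((d + k j + (b - d)) * (d + k j + (-c - d))))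
      (fun j => B j * (c - k j) * ((d - k j + (b - d)) * (d - k j + (-c - d)))) =
      (∏ j, s j) * W (fun j => A j * (b + k j)) (fun j => B j * (b - k j)) := by
    rw [← hsm]
    exact cW (fun j => by simp only [s]; ring) (fun j => by simp only [s]; ring)
  have r3 : W (fun j => A j * (c + k j) * ((d + k j + (a - d)) * (d + k j + (-c - d))))
      (fun j => B j * (c - k j) * ((d - k j + (a - d)) * (d - k j + (-c - d)))) =
      (∏ j, s j) * W (fun j => A j * (a + k j)) (fun j => B j * (a - k j)) := by
    rw [← hsm]
    exact cW (fun j => by simp only [s]; ring) (fun j => by simp only [s]; ring)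
  have r4 : W (fun j => A j * (c + k j) * ((d + k j + (a - d)) * (d + k j + (b - d))))
      (fun j => B j * (c - k j) * ((d - k j + (a - d)) * (d - k j + (b - d)))) =
      W (fun j => A j * (a + k j) * (b + k j) * (c + k j))
        (fun j => B j * (a - k j) * (b - k j) * (c - k j)) :=
    cW (fun j => by ring) (fun j => by ring)
  have r5 : W (fun j => A j * (c + k j) * (d + k j + (a - d)))
      (fun j => B j * (c - k j) * (d - k j + (a - d))) =
      W (fun j => A j * (a + k j) * (c + k j)) (fun j => B j * (a - k j) * (c - k j)) :=
    cW (fun j => by ring) (fun j => by ring)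
  have r6 : W (fun j => A j * (c + k j) * (d + k j + (b - d)))
      (fun j => B j * (c - k j) * (d - k j + (b - d))) =
      W (fun j => A j * (b + k j) * (c + k j)) (fun j => B j * (b - k j) * (c - k j)) :=
    cW (fun j => by ring) (fun j => by ring)
  rw [r1, r2, r3, r4, r5, r6] at key
  refine (mul_eq_zero.mp ?_).resolve_left hs
  linear_combination key


theorem stmt_11 (N : ℕ) (hN : 1 ≤ N) (a1 a2 a3 a4 : ℂ) (k ρp ρm : Fin N → ℂ)
    (ha1 : ∀ j, a1 + k j ≠ 0) (ha1' : ∀ j, a1 - k j ≠ 0)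
    (ha2 : ∀ j, a2 + k j ≠ 0) (ha2' : ∀ j, a2 - k j ≠ 0)
    (ha3 : ∀ j, a3 + k j ≠ 0) (ha3' : ∀ j, a3 - k j ≠ 0)
    (ha4 : ∀ j, a4 + k j ≠ 0) (ha4' : ∀ j, a4 - k j ≠ 0)
    (ψ : Fin N → ℤ → ℤ → ℤ → ℤ → ℂ)
    (hψ : ∀ j n1 n2 n3 n4, ψ j n1 n2 n3 n4 =
      ρp j * (a1 + k j) ^ n1 * (a2 + k j) ^ n2 * (a3 + k j) ^ n3 * (a4 + k j) ^ n4 +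
      ρm j * (a1 - k j) ^ n1 * (a2 - k j) ^ n2 * (a3 - k j) ^ n3 * (a4 - k j) ^ n4)
    (τ : ℤ → ℤ → ℤ → ℤ → ℂ)
    (hτ : ∀ n1 n2 n3 n4, τ n1 n2 n3 n4 =
      (Matrix.of fun j m : Fin N => ψ j (n1 + (m.1 : ℤ)) n2 n3 n4).det) :
    ∀ n1 n2 n3 n4 : ℤ,
      ((a1 - a3) * τ n1 n2 n3 n4 * τ (n1 + 1) n2 (n3 + 1) (n4 + 1) -
        (a1 + a4) * τ (n1 + 1) n2 n3 n4 * τ n1 n2 (n3 + 1) (n4 + 1) +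
        (a3 + a4) * τ (n1 + 1) n2 n3 (n4 + 1) * τ n1 n2 (n3 + 1) n4 = 0) ∧
      ((a2 - a3) * τ n1 n2 n3 n4 * τ n1 (n2 + 1) (n3 + 1) (n4 + 1) -
        (a2 + a4) * τ n1 (n2 + 1) n3 n4 * τ n1 n2 (n3 + 1) (n4 + 1) +
        (a3 + a4) * τ n1 (n2 + 1) n3 (n4 + 1) * τ n1 n2 (n3 + 1) n4 = 0) ∧
      ((a2 - a4) * τ n1 n2 n3 n4 * τ n1 (n2 + 1) (n3 + 1) (n4 + 1) -
        (a2 + a3) * τ n1 (n2 + 1) n3 n4 * τ n1 n2 (n3 + 1) (n4 + 1) +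
        (a3 + a4) * τ n1 n2 n3 (n4 + 1) * τ n1 (n2 + 1) (n3 + 1) n4 = 0) ∧
      ((a1 - a4) * τ n1 n2 n3 n4 * τ (n1 + 1) n2 (n3 + 1) (n4 + 1) -
        (a1 + a3) * τ (n1 + 1) n2 n3 n4 * τ n1 n2 (n3 + 1) (n4 + 1) +
        (a3 + a4) * τ n1 n2 n3 (n4 + 1) * τ (n1 + 1) n2 (n3 + 1) n4 = 0) := by
  intro n1 n2 n3 n4
  let α : ℤ → ℤ → ℤ → ℤ → Fin N → ℂ := fun n1 n2 n3 n4 j =>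
    ρp j * (a1 + k j) ^ n1 * (a2 + k j) ^ n2 * (a3 + k j) ^ n3 * (a4 + k j) ^ n4
  let β : ℤ → ℤ → ℤ → ℤ → Fin N → ℂ := fun n1 n2 n3 n4 j =>
    ρm j * (a1 - k j) ^ n1 * (a2 - k j) ^ n2 * (a3 - k j) ^ n3 * (a4 - k j) ^ n4
  obtain ⟨W, hW⟩ : ∃ W, W = weightDet (fun j => a1 + k j) (fun j => a1 - k j) := ⟨_, rfl⟩
  have hT : ∀ n1 n2 n3 n4, τ n1 n2 n3 n4 = W (α n1 n2 n3 n4) (β n1 n2 n3 n4) := by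
    intro n1 n2 n3 n4
    rw [hτ, hW]
    unfold weightDet
    congr 1
    ext j m
    simp only [Matrix.of_apply, hψ, α, β]
    rw [zpow_add₀ (ha1 j), zpow_add₀ (ha1' j), zpow_natCast, zpow_natCast]
    ring
  -- a shifted value of `τ` has the weights at the base point times the factors of the shifts
  have cW : ∀ {m1 m2 m3 m4 : ℤ} {α' β' : Fin N → ℂ}, (∀ j, α m1 m2 m3 m4 j = α' j) →
      (∀ j, β m1 m2 m3 m4 j = β' j) → τ m1 m2 m3 m4 = W α' β' :=
    fun h h' => by rw [hT, funext h, funext h']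
  have p1 := fun j => zpow_add_one₀ (ha1 j) n1
  have p2 := fun j => zpow_add_one₀ (ha2 j) n2
  have p3 := fun j => zpow_add_one₀ (ha3 j) n3
  have p4 := fun j => zpow_add_one₀ (ha4 j) n4
  have q1 := fun j => zpow_add_one₀ (ha1' j) n1
  have q2 := fun j => zpow_add_one₀ (ha2' j) n2
  have q3 := fun j => zpow_add_one₀ (ha3' j) n3
  have q4 := fun j => zpow_add_one₀ (ha4' j) n4
  have k1 := q3_weights hN k (α n1 n2 n3 n4) (β n1 n2 n3 n4) a1 a1 a3 a4 ha4 ha4' W hW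
  have k2 := q3_weights hN k (α n1 n2 n3 n4) (β n1 n2 n3 n4) a1 a2 a3 a4 ha4 ha4' W hW
  have k3 := q3_weights hN k (α n1 n2 n3 n4) (β n1 n2 n3 n4) a1 a2 a4 a3 ha3 ha3' W hW
  have k4 := q3_weights hN k (α n1 n2 n3 n4) (β n1 n2 n3 n4) a1 a1 a4 a3 ha3 ha3' W hW
  refine ⟨?_, ?_, ?_, ?_⟩
  · rw [← k1, ← hT]
    congr! 4 <;> refine cW (fun j => ?_) (fun j => ?_) <;>
      simp only [α, β, p1, p2, p3, p4, q1, q2, q3, q4] <;> ring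
  · rw [← k2, ← hT]
    congr! 4 <;> refine cW (fun j => ?_) (fun j => ?_) <;>
      simp only [α, β, p1, p2, p3, p4, q1, q2, q3, q4] <;> ring
  · refine Eq.trans ?_ k3
    rw [← hT, add_comm a3 a4, mul_right_comm (a4 + a3)]
    congr! 4 <;> refine cW (fun j => ?_) (fun j => ?_) <;>
      simp only [α, β, p1, p2, p3, p4, q1, q2, q3, q4] <;> ring
  · refine Eq.trans ?_ k4
    rw [← hT, add_comm a3 a4, mul_right_comm (a4 + a3)]
    congr! 4 <;> refine cW (fun j => ?_) (fun j => ?_) <;>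
      simp only [α, β, p1, p2, p3, p4, q1, q2, q3, q4] <;> ring
end
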